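/- Let X be a real-valued Lévy process on a filtered probability space satisfying the usual conditions, with Q^x(B) := P({X(T_x) ∈ B} ∩ {T_x < ∞}) for Borel B ⊆ ℝ and 𝒜 := {x ∈ ℝ : Q^x is carried by a singleton}. If b ∈ 𝒜 and c ∈ (0,b), then either c ∈ 𝒜 or there exists d ∈ (0, b−c] with d ∈ 𝒜. -/

import Mathlib

open MeasureTheory ProbabilityTheory Filter Set
open scoped ENNReal Topology

/-- Left limit of a path at time `t`, with the convention `f(0-) := f(0)`
(and junk `f t` for `t < 0`). -/
noncomputable def leftLimAt (f : ℝ → ℝ) (t : ℝ) : ℝ :=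
  if 0 < t then Function.leftLim f t else f t

/-- A path `f : [0,∞) → ℝ` is càdlàg: right-continuous on `[0,∞)`,
with left limits on `(0,∞)`. -/
def IsCadlag (f : ℝ → ℝ) : Prop :=
  (∀ t : ℝ, 0 ≤ t → ContinuousWithinAt f (Set.Ici t) t) ∧
  (∀ t : ℝ, 0 < t → ∃ l : ℝ, Filter.Tendsto f (nhdsWithin t (Set.Iio t)) (nhds l))

/-- `X` is a Lévy process w.r.t. the filtration `F` under `P`, on a filtered
probability space satisfying the usual conditions. -/
structure IsLevy {Ω : Type*} {m0 : MeasurableSpace Ω} (P : Measure Ω)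
    (F : MeasureTheory.Filtration ℝ m0) (X : ℝ → Ω → ℝ) : Prop where
  isProb : IsProbabilityMeasure P
  complete : P.IsComplete
  rightCont : ∀ t : ℝ, F t = ⨅ s : Set.Ioi t, F (s : ℝ)
  nullF0 : ∀ N : Set Ω, P N = 0 → MeasurableSet[F 0] N
  adapted : ∀ t : ℝ, Measurable[F t] (X t)
  start : P {ω | X 0 ω = 0} = 1
  cadlag : ∀ᵐ ω ∂P, IsCadlag (fun t => X t ω)
  indep : ∀ s t : ℝ, 0 ≤ s → s ≤ t →
    ProbabilityTheory.Indep
      (MeasurableSpace.comap (fun ω => X t ω - X s ω) inferInstance) (F s) P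
  statInc : ∀ s t : ℝ, 0 ≤ s → s ≤ t →
    Measure.map (fun ω => X t ω - X s ω) P = Measure.map (X (t - s)) P

/-- First passage time `T_x = inf{t ≥ 0 : X_t ≥ x}` (valued in `[0,∞]`, `inf ∅ = ∞`). -/
noncomputable def hitT {Ω : Type*} (X : ℝ → Ω → ℝ) (x : ℝ) (ω : Ω) : ℝ≥0∞ :=
  sInf ((fun t : ℝ => ENNReal.ofReal t) '' {t : ℝ | 0 ≤ t ∧ x ≤ X t ω})

/-- First passage time `T̂_x = inf{t ≥ 0 : X_t > x}`. -/
noncomputable def hitThat {Ω : Type*} (X : ℝ → Ω → ℝ) (x : ℝ) (ω : Ω) : ℝ≥0∞ :=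
  sInf ((fun t : ℝ => ENNReal.ofReal t) '' {t : ℝ | 0 ≤ t ∧ x < X t ω})

/-- `X(T_x)`, the position at the first passage time (junk if `T_x = ∞`). -/
noncomputable def stopVal {Ω : Type*} (X : ℝ → Ω → ℝ) (x : ℝ) (ω : Ω) : ℝ :=
  X (hitT X x ω).toReal ω

/-- `X(T̂_x)`. -/
noncomputable def stopValHat {Ω : Type*} (X : ℝ → Ω → ℝ) (x : ℝ) (ω : Ω) : ℝ :=
  X (hitThat X x ω).toReal ω

/-- `Q^x(B) = P({X(T_x) ∈ B} ∩ {T_x < ∞})`. -/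
noncomputable def Qfun {Ω : Type*} {m0 : MeasurableSpace Ω} (P : Measure Ω)
    (X : ℝ → Ω → ℝ) (x : ℝ) (B : Set ℝ) : ℝ≥0∞ :=
  P ({ω | stopVal X x ω ∈ B} ∩ {ω | hitT X x ω < ⊤})

/-- Running supremum `X̄_t = sup{X_s : s ∈ [0,t]}`. -/
noncomputable def runSup {Ω : Type*} (X : ℝ → Ω → ℝ) (t : ℝ) (ω : Ω) : ℝ :=
  sSup ((fun s => X s ω) '' Set.Icc 0 t)

/-!
Let `Q^b` be carried by `{r}`. After the time `T_c` the process starts afresh from `X(T_c)`, so for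
almost every value `y < b` of `X(T_c)` the measure `Q^(b - y)` is carried by `{r - y}`; since
`y ≥ c`, such a value gives `d = b - y ∈ (0, b - c]`. If almost surely there is no such value, then
`X(T_c) ≥ b` on `{T_c < ∞}`, hence `T_b = T_c`, and `Q^c` is carried by `{r}`.

The strong Markov property is formulated for the process observed at rational times. There `T_x` is
replaced by the limit of the strict passage times through levels increasing to `x`; the two times
agree almost surely because a Lévy process is quasi-left-continuous.
-/

section EqualityInLaw

variable {α β E : Type*} {mα : MeasurableSpace α} {mβ : MeasurableSpace β} [MeasurableSpace E]

lemma identDistrib_congr_ae {μ : Measure α} {ν : Measure β} {f f' : α → E} {g g' : β → E}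
    (h : IdentDistrib f g μ ν) (hf : f =ᵐ[μ] f') (hg : g =ᵐ[ν] g') : IdentDistrib f' g' μ ν :=
  ((IdentDistrib.of_ae_eq h.aemeasurable_fst hf).symm.trans h).trans
    (IdentDistrib.of_ae_eq h.aemeasurable_snd hg)

lemma identDistrib_sum {ι : Type*} {μ : ι → Measure α} {ν : ι → Measure β} [Countable ι]
    {f : α → E} {g : β → E} (h : ∀ i, IdentDistrib f g (μ i) (ν i)) :
    IdentDistrib f g (Measure.sum μ) (Measure.sum ν) := by
  have hf := aemeasurable_sum_measure_iff.2 fun i => (h i).aemeasurable_fst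
  have hg := aemeasurable_sum_measure_iff.2 fun i => (h i).aemeasurable_snd
  exact ⟨hf, hg, by simp only [Measure.map_sum hf, Measure.map_sum hg, (h _).map_eq]⟩

variable {μ : Measure α} {ν : Measure β} [IsFiniteMeasure μ] [TopologicalSpace E]

lemma tendsto_lintegral_boundedContinuous_comp [OpensMeasurableSpace E] {f : ℕ → α → E}
    {f_lim : α → E} (hf : ∀ n, AEMeasurable (f n) μ)
    (hlim : ∀ᵐ a ∂μ, Tendsto (fun n => f n a) atTop (𝓝 (f_lim a)))
    (φ : BoundedContinuousFunction E NNReal) :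
    Tendsto (fun n => ∫⁻ a, φ (f n a) ∂μ) atTop (𝓝 (∫⁻ a, φ (f_lim a) ∂μ)) := by
  have hφ : Measurable fun x => (φ x : ℝ≥0∞) := φ.continuous.measurable.coe_nnreal_ennreal
  refine tendsto_lintegral_of_dominated_convergence' (fun _ => (nndist φ 0 : ℝ≥0∞))
    (fun n => hφ.comp_aemeasurable (hf n)) (fun n => ae_of_all _ fun a => ?_) ?_ ?_
  · exact ENNReal.coe_le_coe.2 (BoundedContinuousFunction.NNReal.upper_bound φ (f n a))
  · rw [lintegral_const]
    exact ENNReal.mul_ne_top ENNReal.coe_ne_top (measure_ne_top μ univ)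
  · filter_upwards [hlim] with a ha
    exact ((ENNReal.continuous_coe.comp φ.continuous).tendsto _).comp ha

lemma identDistrib_of_tendsto_ae [IsFiniteMeasure ν] [TopologicalSpace.PseudoMetrizableSpace E]
    [BorelSpace E] {f : ℕ → α → E} {g : ℕ → β → E} {f_lim : α → E} {g_lim : β → E}
    (hfg : ∀ n, IdentDistrib (f n) (g n) μ ν)
    (hf : ∀ᵐ a ∂μ, Tendsto (fun n => f n a) atTop (𝓝 (f_lim a)))
    (hg : ∀ᵐ b ∂ν, Tendsto (fun n => g n b) atTop (𝓝 (g_lim b))) :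
    IdentDistrib f_lim g_lim μ ν := by
  let := TopologicalSpace.pseudoMetrizableSpacePseudoMetric E
  have hf_meas (n) := (hfg n).aemeasurable_fst
  have hg_meas (n) := (hfg n).aemeasurable_snd
  have hf_lim : AEMeasurable f_lim μ := aemeasurable_of_tendsto_metrizable_ae _ hf_meas hf
  have hg_lim : AEMeasurable g_lim ν := aemeasurable_of_tendsto_metrizable_ae _ hg_meas hg
  refine ⟨hf_lim, hg_lim, ext_of_forall_lintegral_eq_of_IsFiniteMeasure fun φ => ?_⟩
  have hφ : Measurable fun x => (φ x : ℝ≥0∞) := φ.continuous.measurable.coe_nnreal_ennreal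
  rw [lintegral_map' hφ.aemeasurable hf_lim, lintegral_map' hφ.aemeasurable hg_lim]
  refine tendsto_nhds_unique (tendsto_lintegral_boundedContinuous_comp hf_meas hf φ) ?_
  refine (tendsto_lintegral_boundedContinuous_comp hg_meas hg φ).congr fun n => ?_
  exact ((hfg n).comp hφ).lintegral_eq.symm

end EqualityInLaw

section Independence

variable {Ω : Type*} {m0 : MeasurableSpace Ω} {P : Measure Ω} [IsProbabilityMeasure P]

lemma iIndep_of_forall_indep_iSup_lt {ι : Type*} [LinearOrder ι] {m : ι → MeasurableSpace Ω}
    (h : ∀ i, Indep (m i) (⨆ j < i, m j) P) : iIndep m P := by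
  refine (iIndep_iff m P).2 fun s => ?_
  induction s using Finset.induction_on_max with
  | empty => simp
  | insert i s hlt ih =>
    intro A hA
    have hpast : MeasurableSet[⨆ j < i, m j] (⋂ j ∈ s, A j) :=
      s.measurableSet_biInter fun j hj =>
        le_iSup₂ (f := fun j (_ : j < i) => m j) j (hlt j hj) _ (hA j (Finset.mem_insert_of_mem hj))
    rw [Finset.set_biInter_insert, Finset.prod_insert fun hi => (hlt i hi).false,
      (Indep_iff _ _ P).1 (h i) _ _ (hA i (Finset.mem_insert_self i s)) hpast,
      ih fun j hj => hA j (Finset.mem_insert_of_mem hj)]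

end Independence

/-- A Lévy process with respect to a filtration that need not satisfy the usual conditions. -/
structure IsRawLevy {Ω : Type*} {m0 : MeasurableSpace Ω} (P : Measure Ω) (F : Filtration ℝ m0)
    (X : ℝ → Ω → ℝ) : Prop where
  adapted : ∀ t : ℝ, Measurable[F t] (X t)
  start : ∀ᵐ ω ∂P, X 0 ω = 0
  cadlag : ∀ᵐ ω ∂P, IsCadlag (X · ω)
  indep : ∀ s t : ℝ, 0 ≤ s → s ≤ t →
    Indep (MeasurableSpace.comap (fun ω => X t ω - X s ω) inferInstance) (F s) P
  statInc : ∀ s t : ℝ, 0 ≤ s → s ≤ t → P.map (fun ω => X t ω - X s ω) = P.map (X (t - s))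

/-- The consecutive increments of a path over the grid of mesh `δ` that starts at time `s`. -/
def gridIncr (f : ℝ → ℝ) (s δ : ℝ) (n : ℕ) : ℝ := f (s + (n + 1) * δ) - f (s + n * δ)

/-- The path after time `s`, relative to its position at time `s`. It is observed at rational times
only, so that the future of a process is a random element of a countable product. -/
def incrPath (f : ℝ → ℝ) (s : ℝ) (q : ℚ≥0) : ℝ := f (s + q) - f s

section SimpleMarkov

lemma sum_gridIncr (f : ℝ → ℝ) (s δ : ℝ) (k : ℕ) :
    ∑ i ∈ Finset.range k, gridIncr f s δ i = f (s + k * δ) - f s := by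
  simpa [gridIncr] using Finset.sum_range_sub (fun i : ℕ => f (s + i * δ)) k

lemma exists_common_denominator (I : Finset ℚ≥0) :
    ∃ N : ℕ, ∀ q ∈ I, ∃ k : ℕ, (q : ℝ) = k * (N : ℝ)⁻¹ := by
  refine ⟨∏ q ∈ I, q.den, fun q hq => ⟨q.num * ∏ p ∈ I.erase q, p.den, ?_⟩⟩
  have hne : (∏ p ∈ I.erase q, (p.den : ℝ)) ≠ 0 :=
    Finset.prod_ne_zero_iff.2 fun p _ => Nat.cast_ne_zero.2 p.den_ne_zero
  rw [← Finset.mul_prod_erase I _ hq, ← div_eq_mul_inv, NNRat.cast_def]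
  push_cast
  rw [mul_div_mul_right _ _ hne]

lemma exists_measurable_restrict_incrPath_eq (I : Finset ℚ≥0) :
    ∃ δ : ℝ, 0 ≤ δ ∧ ∃ Φ : (ℕ → ℝ) → (I → ℝ), Measurable Φ ∧
      ∀ f s, I.restrict (incrPath f s) = Φ (gridIncr f s δ) := by
  obtain ⟨N, hN⟩ := exists_common_denominator I
  choose! k hk using hN
  refine ⟨(N : ℝ)⁻¹, by positivity, fun d q => ∑ i ∈ Finset.range (k q), d i, by fun_prop,
    fun f s => funext fun q => ?_⟩
  simp only [sum_gridIncr, ← hk q q.2, Finset.restrict, incrPath]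

variable {Ω : Type*} {m0 : MeasurableSpace Ω} {P : Measure Ω} {F : Filtration ℝ m0}
  {X : ℝ → Ω → ℝ}

/-- The σ-algebra of the past up to time `s`, followed by those of the increments over the grid of
mesh `δ` after time `s`. -/
@[reducible]
def pastAndGridIncr (F : Filtration ℝ m0) (X : ℝ → Ω → ℝ) (s δ : ℝ) : ℕ → MeasurableSpace Ω
  | 0 => F s
  | k + 1 => MeasurableSpace.comap (fun ω => gridIncr (X · ω) s δ k) inferInstance

namespace IsRawLevy

lemma measurable (hX : IsRawLevy P F X) (t : ℝ) : Measurable (X t) :=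
  (hX.adapted t).mono (F.le t) le_rfl

lemma measurable_gridIncr (hX : IsRawLevy P F X) (s δ : ℝ) (n : ℕ) :
    Measurable fun ω => gridIncr (X · ω) s δ n :=
  (hX.measurable _).sub (hX.measurable _)

lemma measurable_incrPath (hX : IsRawLevy P F X) (s : ℝ) :
    Measurable fun ω => incrPath (X · ω) s :=
  measurable_pi_lambda _ fun _ => (hX.measurable _).sub (hX.measurable _)

variable [IsProbabilityMeasure P] {s δ : ℝ}

lemma iIndep_pastAndGridIncr (hX : IsRawLevy P F X) (hs : 0 ≤ s) (hδ : 0 ≤ δ) :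
    iIndep (pastAndGridIncr F X s δ) P := by
  refine iIndep_of_forall_indep_iSup_lt fun n => ?_
  cases n with
  | zero => simpa [pastAndGridIncr] using indep_bot_right (F s)
  | succ k =>
    have hle {i j : ℕ} (hij : i ≤ j) : s + i * δ ≤ s + j * δ := by gcongr
    have hpast : ⨆ j < k + 1, pastAndGridIncr F X s δ j ≤ F (s + k * δ) := by
      refine iSup₂_le fun j hj => ?_
      cases j with
      | zero => exact F.mono (by simpa using hle k.zero_le)
      | succ i =>
        have hsucc : s + (i + 1) * δ ≤ s + k * δ := mod_cast hle (Nat.lt_succ_iff.1 hj)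
        exact Measurable.comap_le <| ((hX.adapted _).mono (F.mono hsucc) le_rfl).sub
          ((hX.adapted _).mono (F.mono (hle (by lia))) le_rfl)
    exact indep_of_indep_of_le_right
      (hX.indep _ _ (by positivity) (mod_cast hle k.le_succ)) hpast

lemma indep_past_gridIncr (hX : IsRawLevy P F X) (hs : 0 ≤ s) (hδ : 0 ≤ δ) :
    Indep (F s) (MeasurableSpace.comap (fun ω => gridIncr (X · ω) s δ) inferInstance) P := by
  have hle (n : ℕ) : pastAndGridIncr F X s δ n ≤ m0 := by
    cases n with
    | zero => exact F.le s
    | succ k => exact (hX.measurable_gridIncr s δ k).comap_le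
  have h := indep_iSup_of_disjoint hle (hX.iIndep_pastAndGridIncr hs hδ)
    (S := {0}) (T := {0}ᶜ) disjoint_compl_right
  refine indep_of_indep_of_le_left (indep_of_indep_of_le_right h ?_) ?_
  · refine Measurable.comap_le (@measurable_pi_lambda _ _ _ (_) _ _ fun n => ?_)
    exact Measurable.of_comap_le (le_iSup₂ (f := fun j (_ : j ∈ ({0}ᶜ : Set ℕ)) =>
      pastAndGridIncr F X s δ j) (n + 1) n.succ_ne_zero)
  · exact le_iSup₂ (f := fun j (_ : j ∈ ({0} : Set ℕ)) => pastAndGridIncr F X s δ j) 0 rfl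

lemma map_gridIncr (hX : IsRawLevy P F X) (hs : 0 ≤ s) (hδ : 0 ≤ δ) :
    P.map (fun ω => gridIncr (X · ω) s δ) = Measure.infinitePi fun _ : ℕ => P.map (X δ) := by
  have h : iIndepFun (fun n ω => gridIncr (X · ω) s δ n) P :=
    (hX.iIndep_pastAndGridIncr hs hδ).precomp Nat.succ_injective
  rw [h.map_fun_eq_infinitePi_map (hX.measurable_gridIncr s δ)]
  congr with n : 1
  have := hX.statInc (s + n * δ) (s + (n + 1) * δ) (by positivity) (by gcongr; simp)
  rwa [show s + (n + 1) * δ - (s + n * δ) = δ by ring] at this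

lemma indep_past_incrPath (hX : IsRawLevy P F X) (hs : 0 ≤ s) :
    Indep (F s) (MeasurableSpace.comap (fun ω => incrPath (X · ω) s) inferInstance) P := by
  rw [← MeasurableSpace.comap_id (m := F s)]
  refine @IndepFun.indepFun_process ℚ≥0 Ω m0 P Ω _ (F s) _ id _ (measurable_id'' (F.le s))
    (fun q => (hX.measurable _).sub (hX.measurable _)) (fun I => ?_) _
  obtain ⟨δ, hδ, Φ, hΦ, hincr⟩ := exists_measurable_restrict_incrPath_eq I
  have hcomp : (fun ω (q : I) => incrPath (X · ω) s q) = Φ ∘ fun ω => gridIncr (X · ω) s δ :=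
    funext fun ω => hincr (X · ω) s
  refine (@IndepFun_iff_Indep _ _ _ _ (F s) _ _ _ _).2 ?_
  rw [MeasurableSpace.comap_id, hcomp, ← MeasurableSpace.comap_comp]
  exact indep_of_indep_of_le_right (hX.indep_past_gridIncr hs hδ)
    (MeasurableSpace.comap_mono hΦ.comap_le)

lemma map_incrPath (hX : IsRawLevy P F X) (hs : 0 ≤ s) :
    P.map (fun ω => incrPath (X · ω) s) = P.map fun ω => incrPath (X · ω) 0 := by
  refine (map_eq_iff_forall_finset_map_restrict_eq (hX.measurable_incrPath s).aemeasurable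
    (hX.measurable_incrPath 0).aemeasurable).2 fun I => ?_
  obtain ⟨δ, hδ, Φ, hΦ, hincr⟩ := exists_measurable_restrict_incrPath_eq I
  have hgrid (u : ℝ) : Measurable fun ω => gridIncr (X · ω) u δ :=
    measurable_pi_lambda _ (hX.measurable_gridIncr u δ)
  simp_rw [hincr]
  calc P.map (fun ω => Φ (gridIncr (X · ω) s δ))
    _ = (P.map fun ω => gridIncr (X · ω) s δ).map Φ := (Measure.map_map hΦ (hgrid s)).symm
    _ = (P.map fun ω => gridIncr (X · ω) 0 δ).map Φ := by
      rw [hX.map_gridIncr hs hδ, hX.map_gridIncr le_rfl hδ]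
    _ = P.map fun ω => Φ (gridIncr (X · ω) 0 δ) := Measure.map_map hΦ (hgrid 0)

lemma markov (hX : IsRawLevy P F X) (hs : 0 ≤ s) {A : Set Ω}
    (hA : MeasurableSet[F s] A) :
    IdentDistrib (fun ω => (X s ω, incrPath (X · ω) s))
      (fun p : Ω × Ω => (X s p.1, incrPath (X · p.2) 0))
      (P.restrict A) ((P.restrict A).prod P) := by
  have hpos := hX.measurable s
  have hpath := hX.measurable_incrPath s
  have hpath0 := hX.measurable_incrPath 0
  refine ⟨(hpos.prodMk hpath).aemeasurable, (hpos.prodMap hpath0).aemeasurable, ?_⟩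
  refine Eq.trans ?_ (Measure.map_prod_map _ P hpos hpath0)
  refine (Measure.prod_eq fun B C hB hC => ?_).symm
  have hindep := (Indep_iff _ _ P).1 (hX.indep_past_incrPath hs) _ _
    ((hX.adapted s hB).inter hA) ⟨C, hC, rfl⟩
  rw [Measure.map_apply (hpos.prodMk hpath) (hB.prod hC), ← hX.map_incrPath hs,
    Measure.map_apply hpos hB, Measure.map_apply hpath hC, Measure.restrict_apply (hpos hB),
    ← hindep, Measure.restrict_apply (hpos.prodMk hpath (hB.prod hC)), mk_preimage_prod,
    inter_right_comm]

end IsRawLevy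

end SimpleMarkov

section RightApproximation

/-- The `k`-th approximation of the time `t` from the right by a rational number: the next point of
the grid of mesh `1 / (k + 1)`. -/
noncomputable def ratAbove (k : ℕ) (t : ℝ) : ℚ≥0 := (⌊t * (k + 1)⌋₊ + 1) / (k + 1)

lemma coe_ratAbove (k : ℕ) (t : ℝ) : (ratAbove k t : ℝ) = (⌊t * (k + 1)⌋₊ + 1) / (k + 1) := by
  simp [ratAbove]

lemma lt_ratAbove (k : ℕ) (t : ℝ) : t < ratAbove k t := by
  rw [coe_ratAbove, lt_div_iff₀ (by positivity)]
  exact Nat.lt_floor_add_one _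

lemma ratAbove_le {t : ℝ} (ht : 0 ≤ t) (k : ℕ) : (ratAbove k t : ℝ) ≤ t + 1 / (k + 1) := by
  rw [coe_ratAbove, add_div]
  gcongr
  exact div_le_of_le_mul₀ (by positivity) ht (Nat.floor_le (by positivity))

lemma tendsto_ratAbove {t : ℝ} (ht : 0 ≤ t) :
    Tendsto (fun k => (ratAbove k t : ℝ)) atTop (𝓝 t) := by
  refine tendsto_of_tendsto_of_tendsto_of_le_of_le tendsto_const_nhds ?_
    (fun k => (lt_ratAbove k t).le) (ratAbove_le ht)
  simpa using tendsto_one_div_add_atTop_nhds_zero_nat.const_add t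

variable {f : ℝ → ℝ} {t : ℝ}

lemma IsCadlag.tendsto_of_ge (hf : IsCadlag f) (ht : 0 ≤ t) {ι : Type*} {l : Filter ι} {u : ι → ℝ}
    (hu : Tendsto u l (𝓝 t)) (hle : ∀ i, t ≤ u i) : Tendsto (fun i => f (u i)) l (𝓝 (f t)) :=
  (hf.1 t ht).tendsto.comp (tendsto_nhdsWithin_iff.2 ⟨hu, .of_forall hle⟩)

lemma IsCadlag.tendsto_incrPath_apply_ratAbove {s : ℝ} (hf : IsCadlag f) (hs : 0 ≤ s) (ht : 0 ≤ t) :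
    Tendsto (fun k => incrPath f s (ratAbove k t)) atTop (𝓝 (f (s + t) - f s)) :=
  (hf.tendsto_of_ge (by positivity) ((tendsto_ratAbove ht).const_add s)
    fun k => by gcongr; exact (lt_ratAbove k t).le).sub_const _

lemma IsCadlag.tendsto_ratAbove_add (hf : IsCadlag f) (ht : 0 ≤ t) (q : ℚ≥0) :
    Tendsto (fun k => f (ratAbove k t + q)) atTop (𝓝 (f (t + q))) :=
  hf.tendsto_of_ge (by positivity) ((tendsto_ratAbove ht).add_const _)
    fun k => by gcongr; exact (lt_ratAbove k t).le

lemma IsCadlag.tendsto_ratAbove (hf : IsCadlag f) (ht : 0 ≤ t) :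
    Tendsto (fun k => f (ratAbove k t)) atTop (𝓝 (f t)) := by
  simpa using hf.tendsto_ratAbove_add ht 0

lemma IsCadlag.tendsto_incrPath_ratAbove (hf : IsCadlag f) (ht : 0 ≤ t) :
    Tendsto (fun k => incrPath f (ratAbove k t)) atTop (𝓝 (incrPath f t)) :=
  tendsto_pi_nhds.2 fun q => (hf.tendsto_ratAbove_add ht q).sub (hf.tendsto_ratAbove ht)

end RightApproximation

section StrongMarkov

variable {Ω : Type*} {m0 : MeasurableSpace Ω}

/-- Optional times: the events `T < t` (rather than `T ≤ t`) are known at time `t`. -/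
def IsOptionalTime (F : Filtration ℝ m0) (T : Ω → ℝ≥0∞) : Prop :=
  ∀ t : ℝ, MeasurableSet[F t] {ω | T ω < ENNReal.ofReal t}

variable {P : Measure Ω} {F : Filtration ℝ m0} {X : ℝ → Ω → ℝ} {T : Ω → ℝ≥0∞}

lemma IsOptionalTime.measurableSet_lt_top (hT : IsOptionalTime F T) :
    MeasurableSet {ω | T ω < ⊤} := by
  have hEq : {ω | T ω < ⊤} = ⋃ n : ℕ, {ω | T ω < ENNReal.ofReal n} := by
    ext ω
    simp only [mem_iUnion, mem_ofPred_eq, ENNReal.ofReal_natCast]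
    exact ⟨fun h => ENNReal.exists_nat_gt h.ne, fun ⟨n, hn⟩ => hn.trans (ENNReal.natCast_lt_top n)⟩
  rw [hEq]
  exact .iUnion fun n => F.le _ _ (hT n)

/-- `ratAbove k T` is a stopping time with countably many values. -/
lemma IsOptionalTime.measurableSet_floor_eq (hT : IsOptionalTime F T) (k n : ℕ) :
    MeasurableSet[F ((n + 1) / (k + 1))] {ω | T ω < ⊤ ∧ ⌊(T ω).toReal * (k + 1)⌋₊ = n} := by
  have hEq : {ω | T ω < ⊤ ∧ ⌊(T ω).toReal * (k + 1)⌋₊ = n} =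
      {ω | T ω < ENNReal.ofReal ((n + 1) / (k + 1))} \
        {ω | T ω < ENNReal.ofReal (n / (k + 1))} := by
    ext ω
    rcases eq_or_ne (T ω) ⊤ with h | h
    · simp [h]
    · have hk : (0 : ℝ) < k + 1 := by positivity
      simp only [mem_ofPred_eq, Set.mem_sdiff, ENNReal.lt_ofReal_iff_toReal_lt h, lt_div_iff₀ hk,
        not_lt, h.lt_top, true_and, Nat.floor_eq_iff (a := (T ω).toReal * (k + 1)) (by positivity)]
      tauto
  rw [hEq]
  refine (hT _).diff (F.mono ?_ _ (hT _))
  gcongr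
  simp

lemma restrict_eq_sum_fibers {ι : Type*} [Countable ι] {A : Set Ω} {N : Ω → ι}
    (hA : ∀ i, MeasurableSet {ω | ω ∈ A ∧ N ω = i}) :
    P.restrict A = Measure.sum fun i => P.restrict {ω | ω ∈ A ∧ N ω = i} := by
  have hdisj : Pairwise (Function.onFun Disjoint fun i => {ω | ω ∈ A ∧ N ω = i}) :=
    fun i j hij => Set.disjoint_left.2 fun ω hi hj => hij (hi.2.symm.trans hj.2)
  rw [← Measure.restrict_iUnion hdisj hA]
  congr 1
  ext ω
  simp

namespace IsRawLevy

variable [IsProbabilityMeasure P]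

lemma strongMarkov_of_countable (hX : IsRawLevy P F X) {A : Set Ω} {N : Ω → ℕ}
    {t : ℕ → ℝ} (ht : ∀ n, 0 ≤ t n) (hA : ∀ n, MeasurableSet[F (t n)] {ω | ω ∈ A ∧ N ω = n}) :
    IdentDistrib (fun ω => (X (t (N ω)) ω, incrPath (X · ω) (t (N ω))))
      (fun p : Ω × Ω => (X (t (N p.1)) p.1, incrPath (X · p.2) 0))
      (P.restrict A) ((P.restrict A).prod P) := by
  rw [restrict_eq_sum_fibers fun n => F.le _ _ (hA n), Measure.prod_sum_left]
  refine identDistrib_sum fun n => ?_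
  have hN : ∀ᵐ ω ∂P.restrict {ω | ω ∈ A ∧ N ω = n}, N ω = n :=
    (ae_restrict_mem (F.le _ _ (hA n))).mono fun ω hω => hω.2
  refine identDistrib_congr_ae (hX.markov (ht n) (hA n)) ?_ ?_
  · filter_upwards [hN] with ω hω
    simp only [hω]
  · filter_upwards [Measure.quasiMeasurePreserving_fst.ae hN] with p hp
    simp only [hp]

theorem strongMarkov (hX : IsRawLevy P F X) (hT : IsOptionalTime F T) :
    IdentDistrib (fun ω => (X (T ω).toReal ω, incrPath (X · ω) (T ω).toReal))
      (fun p : Ω × Ω => (X (T p.1).toReal p.1, incrPath (X · p.2) 0))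
      (P.restrict {ω | T ω < ⊤}) ((P.restrict {ω | T ω < ⊤}).prod P) := by
  have hfst : ∀ᵐ p ∂(P.restrict {ω | T ω < ⊤}).prod P, IsCadlag (X · p.1) :=
    Measure.quasiMeasurePreserving_fst.ae (ae_restrict_of_ae hX.cadlag)
  refine identDistrib_of_tendsto_ae (f := fun k ω => (X (ratAbove k (T ω).toReal) ω,
      incrPath (X · ω) (ratAbove k (T ω).toReal)))
    (g := fun k p => (X (ratAbove k (T p.1).toReal) p.1, incrPath (X · p.2) 0))
    (fun k => ?_) ?_ ?_
  · simp only [coe_ratAbove]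
    exact hX.strongMarkov_of_countable (N := fun ω => ⌊(T ω).toReal * (k + 1)⌋₊)
      (t := fun n => (n + 1) / (k + 1)) (fun n => by positivity) (hT.measurableSet_floor_eq k)
  · filter_upwards [ae_restrict_of_ae hX.cadlag] with ω hω
    exact (hω.tendsto_ratAbove ENNReal.toReal_nonneg).prodMk_nhds
      (hω.tendsto_incrPath_ratAbove ENNReal.toReal_nonneg)
  · filter_upwards [hfst] with p hp
    exact (hp.tendsto_ratAbove ENNReal.toReal_nonneg).prodMk_nhds tendsto_const_nhds

end IsRawLevy

end StrongMarkov

section LeftLimits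

variable {f : ℝ → ℝ} {t : ℝ} {u : ℕ → ℝ}

lemma IsCadlag.exists_tendsto_of_monotone (hf : IsCadlag f) (hu : Monotone u) (hu0 : 0 ≤ u 0)
    (hut : Tendsto u atTop (𝓝 t)) : ∃ l, Tendsto (fun n => f (u n)) atTop (𝓝 l) := by
  have hle : ∀ n, u n ≤ t := hu.ge_of_tendsto hut
  by_cases hreach : ∃ n, u n = t
  · obtain ⟨N, hN⟩ := hreach
    refine ⟨f t, tendsto_const_nhds.congr' ?_⟩
    filter_upwards [eventually_ge_atTop N] with n hn
    rw [(hle n).antisymm (hN ▸ hu hn)]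
  · push Not at hreach
    have hlt (n : ℕ) : u n < t := (hle n).lt_of_ne (hreach n)
    obtain ⟨l, hl⟩ := hf.2 t (hu0.trans_lt (hlt 0))
    exact ⟨l, hl.comp (tendsto_nhdsWithin_iff.2 ⟨hut, .of_forall hlt⟩)⟩

lemma IsCadlag.tendsto_limUnder_of_monotone (hf : IsCadlag f) (hu : Monotone u) (hu0 : 0 ≤ u 0)
    (hut : Tendsto u atTop (𝓝 t)) :
    Tendsto (fun n => f (u n)) atTop (𝓝 (limUnder atTop fun n => f (u n))) :=
  tendsto_nhds_limUnder (hf.exists_tendsto_of_monotone hu hu0 hut)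

lemma IsCadlag.tendsto_limUnder_add (hf : IsCadlag f) (hu : Monotone u) (hu0 : 0 ≤ u 0)
    (hut : Tendsto u atTop (𝓝 t)) :
    Tendsto (fun δ => limUnder atTop fun n => f (u n + δ)) (𝓝[>] 0) (𝓝 (f t)) := by
  have ht : 0 ≤ t := hu0.trans (hu.ge_of_tendsto hut 0)
  refine Metric.nhds_basis_closedBall.tendsto_right_iff.2 fun ε hε => ?_
  have hball : f ⁻¹' Metric.closedBall (f t) ε ∈ 𝓝[≥] t :=
    hf.1 t ht (Metric.closedBall_mem_nhds _ hε)
  obtain ⟨v, hv, hball⟩ := mem_nhdsGE_iff_exists_Ico_subset.1 hball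
  filter_upwards [Ioo_mem_nhdsGT (sub_pos.2 hv)] with δ hδ
  have hlim : Tendsto (fun n => u n + δ) atTop (𝓝 (t + δ)) := hut.add_const δ
  refine Metric.isClosed_closedBall.mem_of_tendsto
    (hf.tendsto_limUnder_of_monotone (hu.add_const δ) (add_nonneg hu0 hδ.1.le) hlim) ?_
  have hnear : ∀ᶠ n in atTop, u n + δ ∈ Ioo t v :=
    hlim.eventually_mem (Ioo_mem_nhds (by linarith [hδ.1]) (by linarith [hδ.2]))
  exact hnear.mono fun n hn => hball (Ioo_subset_Ico_self hn)

variable {v : ℕ → ℝ≥0∞}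

lemma monotone_toReal (hv : Monotone v) (hfin : ⨆ n, v n < ⊤) : Monotone fun n => (v n).toReal :=
  fun _ j hij => ENNReal.toReal_mono ((le_iSup v j).trans_lt hfin).ne (hv hij)

lemma tendsto_toReal_iSup (hv : Monotone v) (hfin : ⨆ n, v n < ⊤) :
    Tendsto (fun n => (v n).toReal) atTop (𝓝 (⨆ n, v n).toReal) :=
  (ENNReal.tendsto_toReal hfin.ne).comp (tendsto_atTop_iSup hv)

end LeftLimits

section QuasiLeftContinuity

variable {Ω : Type*} {m0 : MeasurableSpace Ω} {P : Measure Ω} {F : Filtration ℝ m0}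
  {X : ℝ → Ω → ℝ}

lemma IsOptionalTime.min_const {T : Ω → ℝ≥0∞} (hT : IsOptionalTime F T) (a : ℝ≥0∞) :
    IsOptionalTime F fun ω => min (T ω) a := fun t => by
  simp only [min_lt_iff]
  exact (hT t).union (.const _)

namespace IsRawLevy

variable [IsProbabilityMeasure P]

lemma identDistrib_incrPath (hX : IsRawLevy P F X) {T : Ω → ℝ≥0∞} (hT : IsOptionalTime F T)
    (hfin : ∀ ω, T ω < ⊤) :
    IdentDistrib (fun ω => incrPath (X · ω) (T ω).toReal) (fun ω => incrPath (X · ω) 0) P P := by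
  have h := (hX.strongMarkov hT).comp measurable_snd
  rw [Set.eq_univ_of_forall (s := {ω | T ω < ⊤}) hfin, Measure.restrict_univ] at h
  have hsnd : IdentDistrib (fun p : Ω × Ω => incrPath (X · p.2) 0)
      (fun ω => incrPath (X · ω) 0) (P.prod P) P :=
    ⟨((hX.measurable_incrPath 0).comp measurable_snd).aemeasurable,
      (hX.measurable_incrPath 0).aemeasurable, by
        rw [← Function.comp_def (fun ω => incrPath (X · ω) 0) Prod.snd, ← Measure.map_map
          (hX.measurable_incrPath 0) measurable_snd, Measure.map_snd_prod]; simp⟩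
  exact h.trans hsnd

variable {T : ℕ → Ω → ℝ≥0∞}

lemma identDistrib_limUnder_add_sub_limUnder (hX : IsRawLevy P F X)
    (hT : ∀ n, IsOptionalTime F (T n)) (hmono : ∀ ω, Monotone (T · ω))
    (hfin : ∀ ω, ⨆ n, T n ω < ⊤) (q : ℚ≥0) :
    IdentDistrib
      (fun ω => (limUnder atTop fun n => X ((T n ω).toReal + q) ω) -
        limUnder atTop fun n => X (T n ω).toReal ω)
      (fun ω => incrPath (X · ω) 0 q) P P := by
  have hlt (n : ℕ) (ω : Ω) : T n ω < ⊤ := (le_iSup (T · ω) n).trans_lt (hfin ω)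
  refine identDistrib_of_tendsto_ae
    (fun n => (hX.identDistrib_incrPath (hT n) (hlt n)).comp (measurable_pi_apply q)) ?_
    (ae_of_all _ fun ω => tendsto_const_nhds)
  filter_upwards [hX.cadlag] with ω hω
  have hreal := monotone_toReal (hmono ω) (hfin ω)
  have hlim := tendsto_toReal_iSup (hmono ω) (hfin ω)
  exact (hω.tendsto_limUnder_of_monotone (hreal.add_const (q : ℝ)) (by positivity)
    (hlim.add_const (q : ℝ))).sub
      (hω.tendsto_limUnder_of_monotone hreal ENNReal.toReal_nonneg hlim)

/-- The increment over `[T n, T n + q]` has the law of `X q`; letting `n → ∞` and then `q → 0`, the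
jump at `⨆ n, T n` has the law of `0`. -/
lemma quasiLeftCont_of_finite (hX : IsRawLevy P F X) (hT : ∀ n, IsOptionalTime F (T n))
    (hmono : ∀ ω, Monotone (T · ω)) (hfin : ∀ ω, ⨆ n, T n ω < ⊤) :
    ∀ᵐ ω ∂P, Tendsto (fun n => X (T n ω).toReal ω) atTop (𝓝 (X (⨆ n, T n ω).toReal ω)) := by
  have hreal (ω : Ω) := monotone_toReal (hmono ω) (hfin ω)
  have hlim (ω : Ω) := tendsto_toReal_iSup (hmono ω) (hfin ω)
  have hsmall : Tendsto (fun m => (ratAbove m 0 : ℝ)) atTop (𝓝[>] 0) :=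
    tendsto_nhdsWithin_iff.2 ⟨tendsto_ratAbove le_rfl, .of_forall fun m => lt_ratAbove m 0⟩
  have hjump : IdentDistrib
      (fun ω => X (⨆ n, T n ω).toReal ω - limUnder atTop fun n => X (T n ω).toReal ω)
      (fun _ => (0 : ℝ)) P P := by
    refine identDistrib_of_tendsto_ae (fun m =>
      hX.identDistrib_limUnder_add_sub_limUnder hT hmono hfin (ratAbove m 0)) ?_ ?_
    · filter_upwards [hX.cadlag] with ω hω
      exact ((hω.tendsto_limUnder_add (hreal ω) ENNReal.toReal_nonneg (hlim ω)).comp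
        hsmall).sub_const _
    · filter_upwards [hX.cadlag] with ω hω
      simpa [incrPath] using (hω.tendsto_ratAbove le_rfl).sub_const (X 0 ω)
  filter_upwards [hX.cadlag,
    hjump.symm.ae_snd (measurableSet_singleton 0) (ae_of_all _ fun _ => rfl)] with ω hω hzero
  rw [sub_eq_zero.1 hzero]
  exact hω.tendsto_limUnder_of_monotone (hreal ω) ENNReal.toReal_nonneg (hlim ω)

theorem quasiLeftCont (hX : IsRawLevy P F X) (hT : ∀ n, IsOptionalTime F (T n))
    (hmono : ∀ ω, Monotone (T · ω)) :
    ∀ᵐ ω ∂P, ⨆ n, T n ω < ⊤ →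
      Tendsto (fun n => X (T n ω).toReal ω) atTop (𝓝 (X (⨆ n, T n ω).toReal ω)) := by
  have htrunc (K : ℕ) := hX.quasiLeftCont_of_finite (fun n => (hT n).min_const K)
    (fun ω i j hij => min_le_min_right _ (hmono ω hij))
    (fun ω => (iSup_le fun n => min_le_right _ _).trans_lt (ENNReal.natCast_lt_top K))
  filter_upwards [ae_all_iff.2 htrunc] with ω hω hfin
  obtain ⟨K, hK⟩ := ENNReal.exists_nat_gt hfin.ne
  have hmin (n : ℕ) : min (T n ω) K = T n ω := min_eq_left ((le_iSup (T · ω) n).trans hK.le)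
  simpa only [hmin] using hω K

end IsRawLevy

end QuasiLeftContinuity

section Passage

/-- The first time at which a path on the rationals strictly exceeds the level `x`. -/
noncomputable def strictPassage (x : ℝ) (w : ℚ≥0 → ℝ) : ℝ≥0∞ :=
  ⨅ q : ℚ≥0, if x < w q then ENNReal.ofReal q else ⊤

/-- The limit of the strict passage times over the levels increasing to `x`: the first time at which
a càdlàg path or its left limit reaches `x`. Unlike `hitT` it only depends on the path at rational
times, and it is announced by the times `strictPassage (x - 1 / (n + 1))`. -/
noncomputable def passage (x : ℝ) (w : ℚ≥0 → ℝ) : ℝ≥0∞ :=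
  ⨆ n : ℕ, strictPassage (x - 1 / (n + 1)) w

/-- The value of the path at its passage time through `x`, if that time is finite, is `r`. The value
is read off along rational times from the right, which is correct for right-continuous paths. -/
def HasPassageValue (x r : ℝ) (w : ℚ≥0 → ℝ) : Prop :=
  passage x w < ⊤ → Tendsto (fun k => w (ratAbove k (passage x w).toReal)) atTop (𝓝 r)

lemma strictPassage_lt_iff {x : ℝ} {w : ℚ≥0 → ℝ} {a : ℝ≥0∞} :
    strictPassage x w < a ↔ ∃ q : ℚ≥0, ENNReal.ofReal q < a ∧ x < w q := by
  simp only [strictPassage, iInf_lt_iff]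
  refine exists_congr fun q => ?_
  split_ifs with h <;> simp [h]

lemma strictPassage_mono (w : ℚ≥0 → ℝ) : Monotone (strictPassage · w) := fun x y hxy =>
  le_of_forall_gt fun a ha => by
    obtain ⟨q, hqa, hq⟩ := strictPassage_lt_iff.1 ha
    exact strictPassage_lt_iff.2 ⟨q, hqa, hxy.trans_lt hq⟩

lemma monotone_strictPassage_sub (x : ℝ) (w : ℚ≥0 → ℝ) :
    Monotone fun n : ℕ => strictPassage (x - 1 / (n + 1)) w := fun i j hij =>
  strictPassage_mono w (by gcongr)

section Measurability

lemma measurable_strictPassage : Measurable fun p : ℝ × (ℚ≥0 → ℝ) => strictPassage p.1 p.2 := by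
  unfold strictPassage
  exact .iInf fun q => .ite (measurableSet_lt (by fun_prop) (by fun_prop)) (by fun_prop)
    (by fun_prop)

lemma measurable_passage : Measurable fun p : ℝ × (ℚ≥0 → ℝ) => passage p.1 p.2 := by
  unfold passage
  exact .iSup fun n =>
    measurable_strictPassage.comp ((measurable_fst.sub_const _).prodMk measurable_snd)

lemma measurable_eval_ratAbove (k : ℕ) :
    Measurable fun p : ℝ × (ℚ≥0 → ℝ) => p.2 (ratAbove k p.1) := by
  have hgrid : Measurable fun p : ℕ × (ℚ≥0 → ℝ) => p.2 ((p.1 + 1) / (k + 1)) :=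
    measurable_from_prod_countable_right fun n => measurable_pi_apply ((n + 1 : ℚ≥0) / (k + 1))
  exact hgrid.comp (f := fun p : ℝ × (ℚ≥0 → ℝ) => (⌊p.1 * (k + 1)⌋₊, p.2)) (by fun_prop)

lemma measurableSet_hasPassageValue :
    MeasurableSet {p : ℝ × ℝ × (ℚ≥0 → ℝ) | HasPassageValue p.1 p.2.1 p.2.2} := by
  have hpassage : Measurable fun p : ℝ × ℝ × (ℚ≥0 → ℝ) => passage p.1 p.2.2 :=
    measurable_passage.comp (f := fun p : ℝ × ℝ × (ℚ≥0 → ℝ) => (p.1, p.2.2)) (by fun_prop)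
  have hvalue (k : ℕ) : Measurable fun p : ℝ × ℝ × (ℚ≥0 → ℝ) =>
      p.2.2 (ratAbove k (passage p.1 p.2.2).toReal) :=
    (measurable_eval_ratAbove k).comp (hpassage.ennreal_toReal.prodMk (by fun_prop))
  have hset : {p : ℝ × ℝ × (ℚ≥0 → ℝ) | HasPassageValue p.1 p.2.1 p.2.2} =
      {p | passage p.1 p.2.2 < ⊤}ᶜ ∪ {p | Tendsto
        (fun k => p.2.2 (ratAbove k (passage p.1 p.2.2).toReal) - p.2.1) atTop (𝓝 0)} := by
    ext p
    simp only [HasPassageValue, imp_iff_not_or, mem_ofPred_eq, mem_union, mem_compl_iff,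
      tendsto_sub_nhds_zero_iff]
  rw [hset]
  exact (measurableSet_lt hpassage measurable_const).compl.union
    (measurableSet_tendsto (𝓝 0) fun k => (hvalue k).sub (by fun_prop))

end Measurability

section Paths

variable {f : ℝ → ℝ} {s t x z b c r : ℝ}

lemma strictPassage_incrPath_lt_iff (hf : IsCadlag f) (hs : 0 ≤ s) {a : ℝ≥0∞} :
    strictPassage x (incrPath f s) < a ↔
      ∃ t : ℝ, 0 ≤ t ∧ ENNReal.ofReal t < a ∧ x < f (s + t) - f s := by
  rw [strictPassage_lt_iff]
  constructor
  · rintro ⟨q, hqa, hq⟩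
    exact ⟨q, q.cast_nonneg, hqa, hq⟩
  · rintro ⟨t, ht, hta, hxt⟩
    have htime : Tendsto (fun k => ENNReal.ofReal (ratAbove k t)) atTop (𝓝 (ENNReal.ofReal t)) :=
      ENNReal.tendsto_ofReal (tendsto_ratAbove ht)
    have hvalue : Tendsto (fun k => incrPath f s (ratAbove k t)) atTop (𝓝 (f (s + t) - f s)) :=
      hf.tendsto_incrPath_apply_ratAbove hs ht
    obtain ⟨k, hka, hkx⟩ :=
      ((htime.eventually_lt_const hta).and (hvalue.eventually_const_lt hxt)).exists
    exact ⟨ratAbove k t, hka, hkx⟩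

lemma strictPassage_incrPath_le (hf : IsCadlag f) (hs : 0 ≤ s) (ht : 0 ≤ t)
    (hx : x < f (s + t) - f s) : strictPassage x (incrPath f s) ≤ ENNReal.ofReal t :=
  le_of_forall_gt fun _ ha => (strictPassage_incrPath_lt_iff hf hs).2 ⟨t, ht, ha, hx⟩

lemma le_apply_strictPassage (hf : IsCadlag f)
    (hfin : strictPassage x (incrPath f 0) < ⊤) :
    x ≤ f (strictPassage x (incrPath f 0)).toReal - f 0 := by
  set S := strictPassage x (incrPath f 0)
  by_contra! hlt
  have hright : ∀ᶠ t in 𝓝[≥] S.toReal, f t - f 0 < x :=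
    ((hf.1 _ ENNReal.toReal_nonneg).tendsto.sub_const (f 0)).eventually_lt_const hlt
  obtain ⟨u, hu, hbelow⟩ := (mem_nhdsGE_iff_exists_Ico_subset).1 hright
  have hSu : S < ENNReal.ofReal u := (ENNReal.lt_ofReal_iff_toReal_lt hfin.ne).2 hu
  obtain ⟨t, ht, htu, hxt⟩ := (strictPassage_incrPath_lt_iff hf le_rfl).1 hSu
  have hSt : S.toReal ≤ t :=
    ENNReal.toReal_le_of_le_ofReal ht (strictPassage_incrPath_le hf le_rfl ht hxt)
  rw [zero_add] at hxt
  exact hxt.not_gt (hbelow ⟨hSt, (ENNReal.ofReal_lt_ofReal_iff_of_nonneg ht).1 htu⟩)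

lemma apply_lt_of_lt_passage (hf : IsCadlag f) (ht : 0 ≤ t)
    (hlt : ENNReal.ofReal t < passage x (incrPath f 0)) : f t - f 0 < x := by
  obtain ⟨n, hn⟩ := lt_iSup_iff.1 hlt
  have hle : f t - f 0 ≤ x - 1 / (n + 1) := by
    by_contra! h
    exact hn.not_ge (strictPassage_incrPath_le hf le_rfl ht (by simpa using h))
  exact hle.trans_lt (sub_lt_self _ Nat.one_div_pos_of_nat)

lemma passage_le_of_le_apply (hf : IsCadlag f) (ht : 0 ≤ t) (hx : x ≤ f t - f 0) :
    passage x (incrPath f 0) ≤ ENNReal.ofReal t :=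
  not_lt.1 fun h => hx.not_gt (apply_lt_of_lt_passage hf ht h)

lemma strictPassage_eq_add (hf : IsCadlag f) (hs : 0 ≤ s)
    (hbefore : ∀ t, 0 ≤ t → t < s → f t - f 0 ≤ z) :
    strictPassage z (incrPath f 0) =
      ENNReal.ofReal s + strictPassage (z - (f s - f 0)) (incrPath f s) := by
  apply le_antisymm
  · refine le_of_forall_gt fun a ha => ?_
    obtain ⟨t, ht, hta, hzt⟩ :=
      (strictPassage_incrPath_lt_iff hf hs).1 (lt_tsub_iff_left.2 ha)
    refine (strictPassage_incrPath_lt_iff hf le_rfl).2 ⟨s + t, by positivity, ?_, ?_⟩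
    · rw [ENNReal.ofReal_add hs ht]
      exact lt_tsub_iff_left.1 hta
    · rw [zero_add]
      linarith
  · refine le_of_forall_gt fun a ha => ?_
    obtain ⟨t, ht, hta, hzt⟩ := (strictPassage_incrPath_lt_iff hf le_rfl).1 ha
    rw [zero_add] at hzt
    have hst : s ≤ t := not_lt.1 fun h => (hbefore t ht h).not_gt hzt
    calc ENNReal.ofReal s + strictPassage (z - (f s - f 0)) (incrPath f s)
        ≤ ENNReal.ofReal s + ENNReal.ofReal (t - s) := by
          gcongr
          refine strictPassage_incrPath_le hf hs (sub_nonneg.2 hst) ?_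
          rw [add_sub_cancel]
          linarith
      _ = ENNReal.ofReal t := by
          rw [← ENNReal.ofReal_add hs (sub_nonneg.2 hst), add_sub_cancel]
      _ < a := hta

lemma passage_eq_add (hf : IsCadlag f) (hs : 0 ≤ s)
    (hbefore : ∀ t, 0 ≤ t → t < s → f t - f 0 ≤ c) (hcb : c < b) :
    passage b (incrPath f 0) =
      ENNReal.ofReal s + passage (b - (f s - f 0)) (incrPath f s) := by
  obtain ⟨N, hN⟩ := exists_nat_one_div_lt (sub_pos.2 hcb)
  have hlevel (n : ℕ) : c ≤ b - 1 / ((n + N : ℕ) + 1) := by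
    have : (1 : ℝ) / ((n + N : ℕ) + 1) ≤ 1 / (N + 1) := by gcongr; simp
    linarith
  unfold passage
  rw [← (monotone_strictPassage_sub b _).iSup_nat_add N,
    ← (monotone_strictPassage_sub (b - (f s - f 0)) _).iSup_nat_add N, ENNReal.add_iSup]
  refine iSup_congr fun n => ?_
  rw [strictPassage_eq_add hf hs fun t ht hts => (hbefore t ht hts).trans (hlevel n),
    sub_right_comm]

lemma hasPassageValue_incrPath_iff (hf : IsCadlag f) (hs : 0 ≤ s) :
    HasPassageValue x r (incrPath f s) ↔ (passage x (incrPath f s) < ⊤ →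
      f (s + (passage x (incrPath f s)).toReal) - f s = r) := by
  have hlim := hf.tendsto_incrPath_apply_ratAbove hs
    (ENNReal.toReal_nonneg (a := passage x (incrPath f s)))
  exact imp_congr_right fun _ => ⟨tendsto_nhds_unique hlim, fun h => h ▸ hlim⟩

lemma HasPassageValue.incrPath (hf : IsCadlag f) (hs : 0 ≤ s)
    (hbefore : ∀ t, 0 ≤ t → t < s → f t - f 0 ≤ c) (hcb : c < b)
    (hval : HasPassageValue b r (incrPath f 0)) :
    HasPassageValue (b - (f s - f 0)) (r - (f s - f 0)) (incrPath f s) := by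
  rw [hasPassageValue_incrPath_iff hf hs]
  intro hfin
  have hpassage := passage_eq_add hf hs hbefore hcb
  have hval := (hasPassageValue_incrPath_iff hf le_rfl).1 hval
    (hpassage ▸ ENNReal.add_lt_top.2 ⟨ENNReal.ofReal_lt_top, hfin⟩)
  rw [hpassage, ENNReal.toReal_add ENNReal.ofReal_ne_top hfin.ne, ENNReal.toReal_ofReal hs,
    zero_add] at hval
  linarith

end Paths

end Passage

section FirstPassage

variable {Ω : Type*} {m0 : MeasurableSpace Ω} {P : Measure Ω} {F : Filtration ℝ m0}
  {X : ℝ → Ω → ℝ}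

lemma IsOptionalTime.iSup {ι : Sort*} [Countable ι] {T : ι → Ω → ℝ≥0∞}
    (hT : ∀ i, IsOptionalTime F (T i)) : IsOptionalTime F fun ω => ⨆ i, T i ω := fun t => by
  have hEq : {ω | ⨆ i, T i ω < ENNReal.ofReal t} =
      ⋃ (q : ℚ≥0) (_ : ENNReal.ofReal q < ENNReal.ofReal t),
        ⋂ i, {ω | T i ω < ENNReal.ofReal q} := by
    ext ω
    simp only [mem_ofPred_eq, mem_iUnion, mem_iInter, exists_prop]
    constructor
    · intro h
      obtain ⟨q, hq, hlt, hqt⟩ := ENNReal.lt_iff_exists_rat_btwn.1 h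
      lift q to ℚ≥0 using hq
      exact ⟨q, hqt, fun i => (le_iSup (T · ω) i).trans_lt hlt⟩
    · rintro ⟨q, hqt, h⟩
      exact (iSup_le fun i => (h i).le).trans_lt hqt
  rw [hEq]
  exact .iUnion fun q => .iUnion fun hq => .iInter fun i =>
    F.mono (ENNReal.ofReal_lt_ofReal_iff'.1 hq).1.le _ (hT i q)

lemma isOptionalTime_strictPassage (hX : ∀ t, Measurable[F t] (X t)) (x : ℝ) :
    IsOptionalTime F fun ω => strictPassage x (incrPath (X · ω) 0) := fun t => by
  simp only [strictPassage_lt_iff, ofPred_exists, ofPred_and, incrPath, zero_add]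
  refine .iUnion fun q => ?_
  by_cases hq : ENNReal.ofReal q < ENNReal.ofReal t
  · have hqt : (q : ℝ) ≤ t := (ENNReal.ofReal_lt_ofReal_iff'.1 hq).1.le
    have hincr : Measurable[F t] fun ω => X q ω - X 0 ω :=
      ((hX q).mono (F.mono hqt) le_rfl).sub
        ((hX 0).mono (F.mono (q.cast_nonneg.trans hqt)) le_rfl)
    exact (MeasurableSet.const _).inter (hincr measurableSet_Ioi)
  · simp [hq]

lemma isOptionalTime_passage (hX : ∀ t, Measurable[F t] (X t)) (x : ℝ) :
    IsOptionalTime F fun ω => passage x (incrPath (X · ω) 0) :=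
  .iSup fun _ => isOptionalTime_strictPassage hX _

lemma hitT_le_ofReal {x t : ℝ} {ω : Ω} (ht : 0 ≤ t) (hx : x ≤ X t ω) :
    hitT X x ω ≤ ENNReal.ofReal t :=
  sInf_le ⟨t, ⟨ht, hx⟩, rfl⟩

lemma hitT_eq_passage {x : ℝ} {ω : Ω} (hω : IsCadlag (X · ω)) (h0 : X 0 ω = 0)
    (hreach : passage x (incrPath (X · ω) 0) < ⊤ →
      x ≤ X (passage x (incrPath (X · ω) 0)).toReal ω) :
    hitT X x ω = passage x (incrPath (X · ω) 0) := by
  apply le_antisymm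
  · rcases eq_or_ne (passage x (incrPath (X · ω) 0)) ⊤ with htop | hfin
    · exact htop ▸ le_top
    · exact (hitT_le_ofReal ENNReal.toReal_nonneg (hreach hfin.lt_top)).trans
        ENNReal.ofReal_toReal_le
  · refine le_sInf ?_
    rintro _ ⟨t, ⟨ht, hxt⟩, rfl⟩
    exact passage_le_of_le_apply hω ht (by simpa [h0] using hxt)

lemma hitT_eq_hitT {b c : ℝ} {ω : Ω} (hcb : c ≤ b) (hfin : hitT X c ω < ⊤)
    (hb : b ≤ stopVal X c ω) : hitT X b ω = hitT X c ω :=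
  ((hitT_le_ofReal ENNReal.toReal_nonneg hb).trans_eq (ENNReal.ofReal_toReal hfin.ne)).antisymm
    (sInf_le_sInf (image_mono fun _ ht => ⟨ht.1, hcb.trans ht.2⟩))

lemma Qfun_compl_singleton_eq_zero_iff {x r : ℝ} :
    Qfun P X x {r}ᶜ = 0 ↔ ∀ᵐ ω ∂P, hitT X x ω < ⊤ → stopVal X x ω = r := by
  rw [Qfun, measure_eq_zero_iff_ae_notMem]
  refine eventually_congr (.of_forall fun ω => ?_)
  simp only [mem_inter_iff, mem_ofPred_eq, mem_compl_iff, mem_singleton_iff]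
  tauto

lemma Qfun_compl_singleton_eq_zero_of_le_stopVal {b c r : ℝ} (hcb : c ≤ b)
    (hjump : ∀ᵐ ω ∂P, hitT X c ω < ⊤ → b ≤ stopVal X c ω) (hr : Qfun P X b {r}ᶜ = 0) :
    Qfun P X c {r}ᶜ = 0 := by
  rw [Qfun_compl_singleton_eq_zero_iff] at hr ⊢
  filter_upwards [hr, hjump] with ω hval hle hfin
  have hhit := hitT_eq_hitT hcb hfin (hle hfin)
  rw [stopVal, hhit] at hval
  exact hval hfin

namespace IsRawLevy

variable [IsProbabilityMeasure P]

lemma ae_le_apply_passage (hX : IsRawLevy P F X) (x : ℝ) :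
    ∀ᵐ ω ∂P, passage x (incrPath (X · ω) 0) < ⊤ →
      x ≤ X (passage x (incrPath (X · ω) 0)).toReal ω := by
  filter_upwards [hX.cadlag, hX.start,
    hX.quasiLeftCont (fun n : ℕ => isOptionalTime_strictPassage hX.adapted (x - 1 / (n + 1)))
      fun ω => monotone_strictPassage_sub x _] with ω hω h0 hlim hfin
  have hlevel : Tendsto (fun n : ℕ => x - 1 / (n + 1)) atTop (𝓝 x) := by
    simpa using tendsto_one_div_add_atTop_nhds_zero_nat.const_sub x
  refine le_of_tendsto_of_tendsto' hlevel (hlim hfin) fun n => ?_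
  simpa [h0] using le_apply_strictPassage hω ((le_iSup _ n).trans_lt hfin)

lemma ae_hitT_eq_passage (hX : IsRawLevy P F X) (x : ℝ) :
    ∀ᵐ ω ∂P, hitT X x ω = passage x (incrPath (X · ω) 0) := by
  filter_upwards [hX.cadlag, hX.start, hX.ae_le_apply_passage x] with ω hω h0 hreach
  exact hitT_eq_passage hω h0 hreach

lemma ae_le_stopVal (hX : IsRawLevy P F X) (x : ℝ) :
    ∀ᵐ ω ∂P, hitT X x ω < ⊤ → x ≤ stopVal X x ω := by
  filter_upwards [hX.ae_hitT_eq_passage x, hX.ae_le_apply_passage x] with ω hhit hreach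
  rwa [stopVal, hhit]

lemma Qfun_compl_singleton_eq_zero_iff_hasPassageValue (hX : IsRawLevy P F X) {x r : ℝ} :
    Qfun P X x {r}ᶜ = 0 ↔ ∀ᵐ ω ∂P, HasPassageValue x r (incrPath (X · ω) 0) := by
  rw [Qfun_compl_singleton_eq_zero_iff]
  refine eventually_congr ?_
  filter_upwards [hX.cadlag, hX.start, hX.ae_hitT_eq_passage x] with ω hω h0 hhit
  rw [hasPassageValue_incrPath_iff hω le_rfl, stopVal, hhit, h0, zero_add, sub_zero]

/-- Seen from `X(T_c)`, the passage through `b` is the passage of an independent copy of `X` through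
`b - X(T_c)`. -/
theorem ae_Qfun_sub_stopVal_eq_zero (hX : IsRawLevy P F X) {b c r : ℝ} (hcb : c < b)
    (hr : Qfun P X b {r}ᶜ = 0) :
    ∀ᵐ ω ∂P, hitT X c ω < ⊤ →
      Qfun P X (b - stopVal X c ω) {r - stopVal X c ω}ᶜ = 0 := by
  set T : Ω → ℝ≥0∞ := fun ω => passage c (incrPath (X · ω) 0)
  have hT : IsOptionalTime F T := isOptionalTime_passage hX.adapted c
  have hafter : ∀ᵐ ω ∂P.restrict {ω | T ω < ⊤},
      HasPassageValue (b - X (T ω).toReal ω) (r - X (T ω).toReal ω)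
        (incrPath (X · ω) (T ω).toReal) := by
    refine (ae_restrict_iff' hT.measurableSet_lt_top).2 ?_
    filter_upwards [hX.cadlag, hX.start,
      hX.Qfun_compl_singleton_eq_zero_iff_hasPassageValue.1 hr] with ω hω h0 hval hfin
    have hbefore (t : ℝ) (ht : 0 ≤ t) (hlt : t < (T ω).toReal) : X t ω - X 0 ω ≤ c :=
      (apply_lt_of_lt_passage hω ht ((ENNReal.ofReal_lt_iff_lt_toReal ht hfin.ne).2 hlt)).le
    simpa only [h0, sub_zero] using
      HasPassageValue.incrPath hω ENNReal.toReal_nonneg hbefore hcb hval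
  have hindep : ∀ᵐ p ∂(P.restrict {ω | T ω < ⊤}).prod P,
      HasPassageValue (b - X (T p.1).toReal p.1) (r - X (T p.1).toReal p.1)
        (incrPath (X · p.2) 0) :=
    (hX.strongMarkov hT).ae_snd (p := fun y => HasPassageValue (b - y.1) (r - y.1) y.2)
      (measurableSet_hasPassageValue.preimage
        (f := fun y : ℝ × (ℚ≥0 → ℝ) => (b - y.1, r - y.1, y.2)) (by fun_prop)) hafter
  filter_upwards [(ae_restrict_iff' hT.measurableSet_lt_top).1 (Measure.ae_ae_of_ae_prod hindep),
    hX.ae_hitT_eq_passage c] with ω hω hhit hfin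
  rw [stopVal, hhit]
  exact hX.Qfun_compl_singleton_eq_zero_iff_hasPassageValue.2 (hω (hhit.symm.trans_lt hfin))

end IsRawLevy

end FirstPassage

lemma IsLevy.isRawLevy {Ω : Type*} {m0 : MeasurableSpace Ω} {P : Measure Ω} {F : Filtration ℝ m0}
    {X : ℝ → Ω → ℝ} (hX : IsLevy P F X) : IsRawLevy P F X where
  adapted := hX.adapted
  start := by
    have := hX.isProb
    have hmeas : MeasurableSet {ω | X 0 ω = 0} :=
      F.le 0 _ (hX.adapted 0 (measurableSet_singleton 0))
    exact (prob_compl_eq_zero_iff hmeas).2 hX.start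
  cadlag := hX.cadlag
  indep := hX.indep
  statInc := hX.statInc

theorem singleton_carrier_descent_general {Ω : Type*} {m0 : MeasurableSpace Ω} {P : Measure Ω}
    [IsProbabilityMeasure P] {F : Filtration ℝ m0} {X : ℝ → Ω → ℝ} (hX : IsRawLevy P F X)
    {b c : ℝ} (hb : ∃ r : ℝ, Qfun P X b {r}ᶜ = 0) (hcb : c < b) :
    (∃ r : ℝ, Qfun P X c {r}ᶜ = 0) ∨
      ∃ d ∈ Ioc (0 : ℝ) (b - c), ∃ r : ℝ, Qfun P X d {r}ᶜ = 0 := by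
  obtain ⟨r, hr⟩ := hb
  by_cases hjump : ∀ᵐ ω ∂P, hitT X c ω < ⊤ → b ≤ stopVal X c ω
  · exact .inl ⟨r, Qfun_compl_singleton_eq_zero_of_le_stopVal hcb.le hjump hr⟩
  · obtain ⟨ω, hω, hreach, hovershoot⟩ := ((not_eventually.1 hjump).and_eventually
      ((hX.ae_le_stopVal c).and (hX.ae_Qfun_sub_stopVal_eq_zero hcb hr))).exists
    push Not at hω
    obtain ⟨hfin, hlt⟩ := hω
    exact .inr ⟨b - stopVal X c ω, ⟨sub_pos.2 hlt, sub_le_sub_left (hreach hfin) b⟩, _,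
      hovershoot hfin⟩

/-- If `b ∈ 𝒜` and `c ∈ (0,b)`, then either `c ∈ 𝒜` or `(0, b−c] ∩ 𝒜 ≠ ∅`,
where `𝒜 = {x : Q^x is carried by a singleton}`. -/
theorem singleton_carrier_descent {Ω : Type*} {m0 : MeasurableSpace Ω}
    (P : Measure Ω) (F : MeasureTheory.Filtration ℝ m0) (X : ℝ → Ω → ℝ)
    (hX : IsLevy P F X)
    (b c : ℝ) (hb : b ∈ {x : ℝ | ∃ r : ℝ, Qfun P X x ({r}ᶜ) = 0})
    (hc : 0 < c) (hcb : c < b) :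
    c ∈ {x : ℝ | ∃ r : ℝ, Qfun P X x ({r}ᶜ) = 0} ∨
    ∃ d ∈ Set.Ioc (0 : ℝ) (b - c), d ∈ {x : ℝ | ∃ r : ℝ, Qfun P X x ({r}ᶜ) = 0} := by
  have := hX.isProb
  exact singleton_carrier_descent_general hX.isRawLevy hb hcb
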